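/- (Intrinsic characterisation of the lower and upper measures.) Let λ be a probability measure on the set of simplicial complexes Y ⊆ ∂Δ_n (a nonnegative function on complexes summing to 1), and let p_σ ∈ [0,1] (σ ∈ ∂Δ_n) be fixed, q_σ = 1 − p_σ. Then: (1) λ = P̲_n if and only if for every simplicial complex K ⊆ ∂Δ_n one has Σ_{Y ⊇ K} λ(Y) = ∏_{σ∈K} p_σ; (2) λ = P̄_n if and only if for every simplicial complex K ⊆ ∂Δ_n one has Σ_{Y ⊆ K} λ(Y) = ∏_{σ∈∂Δ_n, σ∉K} q_σ. -/

import Mathlib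

open Finset

/-- The full simplex `Δₙ`: all nonempty subsets of `[n] = {0,…,n}`. -/
def simplexAll (n : ℕ) : Finset (Finset (Fin (n+1))) :=
  Finset.univ.filter fun σ => σ.Nonempty

/-- The boundary `∂Δₙ`: all nonempty proper subsets of `[n]`. -/
def bdry (n : ℕ) : Finset (Finset (Fin (n+1))) :=
  Finset.univ.filter fun σ => σ.Nonempty ∧ σ ≠ Finset.univ

/-- A hypergraph is a simplicial complex if it is closed under passing to
nonempty subsets. -/
def IsComplex {n : ℕ} (X : Finset (Finset (Fin (n+1)))) : Prop :=
  ∀ σ ∈ X, ∀ τ : Finset (Fin (n+1)), τ ⊆ σ → τ.Nonempty → τ ∈ X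

instance {n : ℕ} (X : Finset (Finset (Fin (n+1)))) : Decidable (IsComplex X) :=
  inferInstanceAs (Decidable (∀ σ ∈ X, ∀ τ : Finset (Fin (n+1)), τ ⊆ σ → τ.Nonempty → τ ∈ X))

/-- The dual hypergraph `c(X) = {σ̂ : σ ∈ ∂Δₙ, σ ∉ X}`, where `σ̂ = [n] \ σ`. -/
def dual {n : ℕ} (X : Finset (Finset (Fin (n+1)))) : Finset (Finset (Fin (n+1))) :=
  (bdry n \ X).image fun σ => σᶜ

/-- `X̄`: the smallest simplicial complex containing the hypergraph `X`. -/
def clUp {n : ℕ} (X : Finset (Finset (Fin (n+1)))) : Finset (Finset (Fin (n+1))) :=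
  Finset.univ.filter fun τ => τ.Nonempty ∧ ∃ σ ∈ X, τ ⊆ σ

/-- `X̲`: the largest simplicial complex contained in the hypergraph `X`. -/
def clLow {n : ℕ} (X : Finset (Finset (Fin (n+1)))) : Finset (Finset (Fin (n+1))) :=
  Finset.univ.filter fun τ => τ.Nonempty ∧ ∀ σ : Finset (Fin (n+1)), σ ⊆ τ → σ.Nonempty → σ ∈ X

/-- The Bernoulli measure with parameters `p` on hypergraphs contained in the
ambient set `S` of simplices: `P(X) = ∏_{σ∈X} p σ · ∏_{σ∈S\X} (1 - p σ)`. -/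
def bern {n : ℕ} (S : Finset (Finset (Fin (n+1)))) (p : Finset (Fin (n+1)) → ℝ)
    (X : Finset (Finset (Fin (n+1)))) : ℝ :=
  (∏ σ ∈ X, p σ) * ∏ σ ∈ S \ X, (1 - p σ)

/-- The upper measure: `P̄(Y) = Σ_{X ⊆ S, X̄ = Y} P(X)`. -/
def upperP {n : ℕ} (S : Finset (Finset (Fin (n+1)))) (p : Finset (Fin (n+1)) → ℝ)
    (Y : Finset (Finset (Fin (n+1)))) : ℝ :=
  ∑ X ∈ S.powerset.filter (fun X => clUp X = Y), bern S p X

/-- The lower measure: `P̲(Y) = Σ_{X ⊆ S, X̲ = Y} P(X)`. -/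
def lowerP {n : ℕ} (S : Finset (Finset (Fin (n+1)))) (p : Finset (Fin (n+1)) → ℝ)
    (Y : Finset (Finset (Fin (n+1)))) : ℝ :=
  ∑ X ∈ S.powerset.filter (fun X => clLow X = Y), bern S p X

/-- External simplices of `Y` relative to the ambient set `S`: simplices
`σ ∈ S` with `σ ∉ Y` but every nonempty proper subset of `σ` in `Y`. -/
def extSimp {n : ℕ} (S Y : Finset (Finset (Fin (n+1)))) : Finset (Finset (Fin (n+1))) :=
  S.filter fun σ => σ ∉ Y ∧ ∀ τ : Finset (Fin (n+1)), τ ⊂ σ → τ.Nonempty → τ ∈ Y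

/-- Maximal simplices of `Y`: simplices of `Y` not properly contained in another
simplex of `Y`. -/
def maxSimp {n : ℕ} (Y : Finset (Finset (Fin (n+1)))) : Finset (Finset (Fin (n+1))) :=
  Y.filter fun σ => ∀ τ ∈ Y, σ ⊆ τ → σ = τ

/-!
A function on complexes is determined by its sums over the complexes above (or below) each `K`, by
induction along inclusion, so it suffices to compute these sums for `lowerP` and `upperP`. For a
complex `K` we have `K ⊆ clLow X ↔ K ⊆ X` and `clUp X ⊆ K ↔ X ⊆ K`, which turns them into total
Bernoulli weights of intervals `{X | A ⊆ X ⊆ B}` of hypergraphs. Such a weight is the product of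
`p σ` over `σ ∈ A`, of `p σ + (1 - p σ) = 1` over `σ ∈ B \ A`, and of `1 - p σ` over `σ ∉ B`.
-/

section PartialOrder

variable {α M : Type*} [PartialOrder α] [DecidableLE α] [AddCancelCommMonoid M]
  {T : Finset α} {f g : α → M}

lemma forall_sum_filter_ge_eq_iff :
    (∀ a ∈ T, ∑ b ∈ T with a ≤ b, f b = ∑ b ∈ T with a ≤ b, g b) ↔ ∀ a ∈ T, f a = g a := by
  classical
  refine ⟨fun h a ha => ?_, fun h a _ => sum_congr rfl fun b hb => h b (mem_filter.1 hb).1⟩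
  refine (T.finite_toSet.wellFoundedOn (r := (· > ·))).induction
    (P := fun a => f a = g a) ha fun a ha ih => ?_
  have ha_mem : a ∈ T.filter (a ≤ ·) := mem_filter.2 ⟨ha, le_rfl⟩
  have above : ∑ b ∈ (T.filter (a ≤ ·)).erase a, f b = ∑ b ∈ (T.filter (a ≤ ·)).erase a, g b :=
    sum_congr rfl fun b hb => by
      obtain ⟨hne, hbT, hab⟩ : b ≠ a ∧ b ∈ T ∧ a ≤ b := by simpa using hb
      exact ih b hbT (hab.lt_of_ne' hne)
  have total := h a ha
  rw [← add_sum_erase _ _ ha_mem, ← add_sum_erase _ _ ha_mem, above] at total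
  exact add_right_cancel total

lemma forall_sum_filter_le_eq_iff :
    (∀ a ∈ T, ∑ b ∈ T with b ≤ a, f b = ∑ b ∈ T with b ≤ a, g b) ↔ ∀ a ∈ T, f a = g a :=
  forall_sum_filter_ge_eq_iff (α := αᵒᵈ)

end PartialOrder

lemma sum_Icc_prod_mul_prod_sdiff {ι R : Type*} [DecidableEq ι] [CommSemiring R] (f g : ι → R)
    {A B S : Finset ι} (hAB : A ⊆ B) (hBS : B ⊆ S) :
    ∑ X ∈ Icc A B, (∏ i ∈ X, f i) * ∏ i ∈ S \ X, g i =
      (∏ i ∈ A, f i) * (∏ i ∈ B \ A, (f i + g i)) * ∏ i ∈ S \ B, g i := by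
  have disjoint_A {Z : Finset ι} (hZ : Z ∈ (B \ A).powerset) : Disjoint A Z :=
    disjoint_sdiff.mono_right (mem_powerset.1 hZ)
  have union_injOn : Set.InjOn (A ∪ ·) (B \ A).powerset := fun Z hZ W hW (h : A ∪ Z = A ∪ W) => by
    rw [← union_sdiff_cancel_left (disjoint_A hZ), h, union_sdiff_cancel_left (disjoint_A hW)]
  rw [Icc_eq_image_powerset hAB, sum_image union_injOn, prod_add, mul_sum, sum_mul]
  refine sum_congr rfl fun Z hZ => ?_
  have compl_eq : S \ (A ∪ Z) = (B \ A) \ Z ∪ S \ B := by grind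
  have compl_disjoint : Disjoint ((B \ A) \ Z) (S \ B) :=
    disjoint_sdiff.mono_left (sdiff_subset.trans sdiff_subset)
  rw [prod_union (disjoint_A hZ), compl_eq, prod_union compl_disjoint]
  ring

section Complex

variable {n : ℕ} {S X K : Finset (Finset (Fin (n + 1)))}

lemma sum_bern_Icc {A B : Finset (Finset (Fin (n + 1)))} (p : Finset (Fin (n + 1)) → ℝ)
    (hAB : A ⊆ B) (hBS : B ⊆ S) :
    ∑ X ∈ Icc A B, bern S p X = (∏ σ ∈ A, p σ) * ∏ σ ∈ S \ B, (1 - p σ) := by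
  simpa [bern] using sum_Icc_prod_mul_prod_sdiff p (fun σ => 1 - p σ) hAB hBS

lemma isComplex_bdry : IsComplex (bdry n) := by
  intro σ hσ τ hτσ hτ
  have hσ_ne : σ ≠ univ := (mem_filter.1 hσ).2.2
  exact mem_filter.2 ⟨mem_univ τ, hτ, fun h => hσ_ne (univ_subset_iff.1 (h ▸ hτσ))⟩

lemma isComplex_clLow : IsComplex (clLow X) := by
  intro σ hσ τ hτσ hτ
  exact mem_filter.2 ⟨mem_univ τ, hτ, fun ρ hρτ => (mem_filter.1 hσ).2.2 ρ (hρτ.trans hτσ)⟩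

lemma isComplex_clUp : IsComplex (clUp X) := by
  intro σ hσ τ hτσ hτ
  obtain ⟨ρ, hρX, hσρ⟩ := (mem_filter.1 hσ).2.2
  exact mem_filter.2 ⟨mem_univ τ, hτ, ρ, hρX, hτσ.trans hσρ⟩

lemma clLow_subset : clLow X ⊆ X := fun σ hσ =>
  (mem_filter.1 hσ).2.2 σ Subset.rfl (mem_filter.1 hσ).2.1

lemma subset_clUp (hX : ∀ σ ∈ X, σ.Nonempty) : X ⊆ clUp X := fun σ hσ =>
  mem_filter.2 ⟨mem_univ σ, hX σ hσ, σ, hσ, Subset.rfl⟩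

lemma IsComplex.subset_clLow_iff (hK : IsComplex K) (hne : ∀ σ ∈ K, σ.Nonempty) :
    K ⊆ clLow X ↔ K ⊆ X :=
  ⟨fun h => h.trans clLow_subset, fun h σ hσ =>
    mem_filter.2 ⟨mem_univ σ, hne σ hσ, fun τ hτσ hτ => h (hK σ hσ τ hτσ hτ)⟩⟩

lemma IsComplex.clUp_subset_iff (hK : IsComplex K) (hX : ∀ σ ∈ X, σ.Nonempty) :
    clUp X ⊆ K ↔ X ⊆ K := by
  refine ⟨(subset_clUp hX).trans, fun h σ hσ => ?_⟩
  obtain ⟨-, hσ_ne, τ, hτX, hστ⟩ := mem_filter.1 hσ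
  exact hK τ (h hτX) σ hστ hσ_ne

lemma IsComplex.sum_lowerP (hK : IsComplex K) (hKS : K ⊆ S) (hne : ∀ σ ∈ K, σ.Nonempty)
    (p : Finset (Fin (n + 1)) → ℝ) :
    ∑ Y ∈ S.powerset.filter (fun Y => IsComplex Y ∧ K ⊆ Y), lowerP S p Y = ∏ σ ∈ K, p σ := by
  have preimage : (S.powerset.filter fun X =>
      clLow X ∈ S.powerset.filter fun Y => IsComplex Y ∧ K ⊆ Y) = Icc K S := by
    ext X
    simp only [mem_filter, mem_powerset, mem_Icc, isComplex_clLow, true_and,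
      hK.subset_clLow_iff hne]
    exact ⟨fun h => ⟨h.2.2, h.1⟩, fun h => ⟨h.2, clLow_subset.trans h.2, h.1⟩⟩
  simp only [lowerP]
  rw [sum_fiberwise_eq_sum_filter, preimage, sum_bern_Icc p hKS Subset.rfl, Finset.sdiff_self,
    prod_empty, mul_one]

lemma IsComplex.sum_upperP (hK : IsComplex K) (hKS : K ⊆ S) (hS : IsComplex S)
    (hne : ∀ σ ∈ S, σ.Nonempty) (p : Finset (Fin (n + 1)) → ℝ) :
    ∑ Y ∈ S.powerset.filter (fun Y => IsComplex Y ∧ Y ⊆ K), upperP S p Y =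
      ∏ σ ∈ S \ K, (1 - p σ) := by
  have preimage : (S.powerset.filter fun X =>
      clUp X ∈ S.powerset.filter fun Y => IsComplex Y ∧ Y ⊆ K) = Icc ∅ K := by
    ext X
    simp only [mem_filter, mem_powerset, mem_Icc, isComplex_clUp, true_and]
    constructor
    · rintro ⟨hXS, -, hXK⟩
      exact ⟨empty_subset X, (subset_clUp fun σ hσ => hne σ (hXS hσ)).trans hXK⟩
    · rintro ⟨-, hXK⟩
      have hXS : X ⊆ S := hXK.trans hKS
      have hX : ∀ σ ∈ X, σ.Nonempty := fun σ hσ => hne σ (hXS hσ)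
      exact ⟨hXS, (hS.clUp_subset_iff hX).2 hXS, (hK.clUp_subset_iff hX).2 hXK⟩
  simp only [upperP]
  rw [sum_fiberwise_eq_sum_filter, preimage, sum_bern_Icc p (empty_subset K) hKS, prod_empty,
    one_mul]

theorem eq_lowerP_iff (hne : ∀ σ ∈ S, σ.Nonempty) (p : Finset (Fin (n + 1)) → ℝ)
    (lam : Finset (Finset (Fin (n + 1))) → ℝ) :
    (∀ Y ∈ S.powerset.filter (fun Y => IsComplex Y), lam Y = lowerP S p Y) ↔
      ∀ K ∈ S.powerset.filter (fun K => IsComplex K),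
        ∑ Y ∈ S.powerset.filter (fun Y => IsComplex Y ∧ K ⊆ Y), lam Y = ∏ σ ∈ K, p σ := by
  rw [← forall_sum_filter_ge_eq_iff]
  refine forall₂_congr fun K hK => ?_
  obtain ⟨hKS, hK_complex⟩ : K ⊆ S ∧ IsComplex K := by simpa using hK
  rw [filter_filter, hK_complex.sum_lowerP hKS fun σ hσ => hne σ (hKS hσ)]

theorem eq_upperP_iff (hS : IsComplex S) (hne : ∀ σ ∈ S, σ.Nonempty)
    (p : Finset (Fin (n + 1)) → ℝ) (lam : Finset (Finset (Fin (n + 1))) → ℝ) :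
    (∀ Y ∈ S.powerset.filter (fun Y => IsComplex Y), lam Y = upperP S p Y) ↔
      ∀ K ∈ S.powerset.filter (fun K => IsComplex K),
        ∑ Y ∈ S.powerset.filter (fun Y => IsComplex Y ∧ Y ⊆ K), lam Y =
          ∏ σ ∈ S \ K, (1 - p σ) := by
  rw [← forall_sum_filter_le_eq_iff]
  refine forall₂_congr fun K hK => ?_
  obtain ⟨hKS, hK_complex⟩ : K ⊆ S ∧ IsComplex K := by simpa using hK
  rw [filter_filter, hK_complex.sum_upperP hKS hS hne]

theorem intrinsic_characterisation_general (hS : IsComplex S) (hne : ∀ σ ∈ S, σ.Nonempty)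
    (p : Finset (Fin (n + 1)) → ℝ) (lam : Finset (Finset (Fin (n + 1))) → ℝ) :
    ((∀ Y ∈ S.powerset.filter (fun Y => IsComplex Y), lam Y = lowerP S p Y) ↔
      (∀ K ∈ S.powerset.filter (fun K => IsComplex K),
        ∑ Y ∈ S.powerset.filter (fun Y => IsComplex Y ∧ K ⊆ Y), lam Y = ∏ σ ∈ K, p σ)) ∧
    ((∀ Y ∈ S.powerset.filter (fun Y => IsComplex Y), lam Y = upperP S p Y) ↔
      (∀ K ∈ S.powerset.filter (fun K => IsComplex K),
        ∑ Y ∈ S.powerset.filter (fun Y => IsComplex Y ∧ Y ⊆ K), lam Y =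
          ∏ σ ∈ S \ K, (1 - p σ))) :=
  ⟨eq_lowerP_iff hne p lam, eq_upperP_iff hS hne p lam⟩

end Complex

/-- Intrinsic characterisation of the lower and upper measures: a probability
measure `λ` on simplicial complexes `Y ⊆ ∂Δₙ` equals `P̲ₙ` iff
`λ(Y ⊇ K) = ∏_{σ∈K} p_σ` for every complex `K`, and equals `P̄ₙ` iff
`λ(Y ⊆ K) = ∏_{σ∉K} q_σ` for every complex `K`. -/
theorem intrinsic_characterisation (n : ℕ) (hn : 1 ≤ n)
    (p : Finset (Fin (n+1)) → ℝ) (hp : ∀ σ ∈ bdry n, 0 ≤ p σ ∧ p σ ≤ 1)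
    (lam : Finset (Finset (Fin (n+1))) → ℝ)
    (hnonneg : ∀ Y ∈ (bdry n).powerset.filter (fun Y => IsComplex Y), 0 ≤ lam Y)
    (hsum : ∑ Y ∈ (bdry n).powerset.filter (fun Y => IsComplex Y), lam Y = 1) :
    ((∀ Y ∈ (bdry n).powerset.filter (fun Y => IsComplex Y),
        lam Y = lowerP (bdry n) p Y) ↔
      (∀ K ∈ (bdry n).powerset.filter (fun K => IsComplex K),
        ∑ Y ∈ (bdry n).powerset.filter (fun Y => IsComplex Y ∧ K ⊆ Y), lam Y
          = ∏ σ ∈ K, p σ)) ∧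
    ((∀ Y ∈ (bdry n).powerset.filter (fun Y => IsComplex Y),
        lam Y = upperP (bdry n) p Y) ↔
      (∀ K ∈ (bdry n).powerset.filter (fun K => IsComplex K),
        ∑ Y ∈ (bdry n).powerset.filter (fun Y => IsComplex Y ∧ Y ⊆ K), lam Y
          = ∏ σ ∈ bdry n \ K, (1 - p σ))) :=
  intrinsic_characterisation_general isComplex_bdry (fun _ hσ => (mem_filter.1 hσ).2.1) p lam
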